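/- Let Σ ∈ ℝ^{n×n} be positive definite and let f : ℝⁿ → ℝ^K be measurable with each component f^i taking values in [0,1]. Define g_Σ^i(x) = E_{ε ~ N(0,Σ)}[f^i(x + ε)] and assume 0 < g_Σ^i(x) < 1 for all i and all x. Fix x ∈ ℝⁿ and let c_A be an index maximizing g_Σ^i(x) over i. Then for every δ ∈ ℝⁿ satisfying √(δᵀΣ⁻¹δ) ≤ (1/2) · (Φ⁻¹(g_Σ^{c_A}(x)) − Φ⁻¹(max_{c ≠ c_A} g_Σ^c(x))), one has g_Σ^{c_A}(x + δ) ≥ g_Σ^c(x + δ) for every c ≠ c_A. -/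

import Mathlib

open MeasureTheory Matrix

/-- Density of the centered Gaussian `N(0, Σ)` on ℝⁿ (w.r.t. Lebesgue measure). -/
noncomputable def gaussDensity (n : ℕ) (Sig : Matrix (Fin n) (Fin n) ℝ)
    (ε : Fin n → ℝ) : ℝ :=
  (Real.sqrt ((2 * Real.pi) ^ n * Sig.det))⁻¹ * Real.exp (-(ε ⬝ᵥ (Sig⁻¹ *ᵥ ε)) / 2)

/-- Standard Gaussian cumulative distribution function Φ on ℝ. -/
noncomputable def stdGaussianCDF (x : ℝ) : ℝ :=
  (ProbabilityTheory.gaussianReal 0 1 (Set.Iic x)).toReal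

/-!
Translating `N(0, Σ)` by `Σ w` multiplies it by the likelihood ratio `exp (⟨w, ε⟩ - ⟨w, Σ w⟩ / 2)`,
a function of the single coordinate `⟨w, ε⟩`. By the Neyman–Pearson argument, among the
`[0, 1]`-valued functions with a given Gaussian mean, the indicator of a half-space orthogonal to
`w` therefore gains the most under the translation. Since `⟨w, ε⟩` is a centered real Gaussian,
the extremal gain is explicit: translation by `δ` moves a mean `Φ(a)` at most to
`Φ(a ± √(δᵀΣ⁻¹δ))`. To exchange the order of two classes, the two means have to close the whole gap
between their quantiles, so one of them has to move by more than half of it.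
-/

open ProbabilityTheory
open scoped NNReal

section GaussianIntegral

variable {ι : Type*} [Fintype ι]

lemma integral_exp_neg_dotProduct_self_div_two :
    ∫ z : ι → ℝ, Real.exp (-(z ⬝ᵥ z) / 2) = Real.sqrt (2 * Real.pi) ^ Fintype.card ι := by
  have exp_eq_prod (z : ι → ℝ) :
      Real.exp (-(z ⬝ᵥ z) / 2) = ∏ i, Real.exp (-(1 / 2) * z i ^ 2) := by
    rw [← Real.exp_sum, ← Finset.mul_sum]
    simp only [dotProduct, pow_two]
    ring_nf
  simp_rw [exp_eq_prod]
  rw [integral_fintype_prod_volume_eq_pow (fun t : ℝ => Real.exp (-(1 / 2) * t ^ 2)),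
    integral_gaussian]
  ring_nf

open scoped MatrixOrder Matrix.Norms.L2Operator in
lemma exists_eq_transpose_mul_self_of_posSemidef {A : Matrix ι ι ℝ} (hA : A.PosSemidef) :
    ∃ B : Matrix ι ι ℝ, A = Bᵀ * B := by
  classical
  obtain ⟨B, hB⟩ := CStarAlgebra.nonneg_iff_eq_star_mul_self.mp hA.nonneg
  exact ⟨B, by rw [hB, star_eq_conjTranspose, conjTranspose_eq_transpose_of_trivial]⟩

variable [DecidableEq ι]

lemma integral_comp_mulVec {E : Type*} [NormedAddCommGroup E] [NormedSpace ℝ E]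
    {B : Matrix ι ι ℝ} (hB : B.det ≠ 0) (f : (ι → ℝ) → E) :
    ∫ x, f (B *ᵥ x) = |B.det|⁻¹ • ∫ x, f x := by
  have injective : Function.Injective (toLin' B) :=
    mulVec_injective_iff_isUnit.2 ((isUnit_iff_isUnit_det B).2 hB.isUnit)
  have embedding : MeasurableEmbedding (toLin' B) :=
    (LinearMap.isClosedEmbedding_of_injective
      (LinearMap.ker_eq_bot.2 injective)).measurableEmbedding
  calc ∫ x, f (B *ᵥ x) = ∫ x, f x ∂(volume.map (toLin' B)) := (embedding.integral_map f).symm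
    _ = |B.det|⁻¹ • ∫ x, f x := by
      rw [Real.map_matrix_volume_pi_eq_smul_volume_pi hB, integral_smul_measure,
        ENNReal.toReal_ofReal (abs_nonneg _), abs_inv]

lemma integral_exp_neg_dotProduct_mulVec_div_two {A : Matrix ι ι ℝ} (hA : A.PosDef) :
    ∫ x, Real.exp (-(x ⬝ᵥ (A *ᵥ x)) / 2) =
      Real.sqrt ((2 * Real.pi) ^ Fintype.card ι * A.det⁻¹) := by
  obtain ⟨B, rfl⟩ := exists_eq_transpose_mul_self_of_posSemidef hA.posSemidef
  have det_eq : (Bᵀ * B).det = B.det ^ 2 := by rw [det_mul, det_transpose, sq]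
  have det_ne_zero : B.det ≠ 0 := fun h => hA.det_pos.ne' (by rw [det_eq, h, zero_pow two_ne_zero])
  have quadratic_eq (x : ι → ℝ) : x ⬝ᵥ ((Bᵀ * B) *ᵥ x) = (B *ᵥ x) ⬝ᵥ (B *ᵥ x) := by
    rw [← mulVec_mulVec, dotProduct_mulVec, vecMul_transpose]
  have sqrt_pow : Real.sqrt ((2 * Real.pi) ^ Fintype.card ι) =
      Real.sqrt (2 * Real.pi) ^ Fintype.card ι := by
    rw [Real.sqrt_eq_iff_mul_self_eq (by positivity) (by positivity), ← mul_pow,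
      Real.mul_self_sqrt (by positivity)]
  simp_rw [quadratic_eq]
  rw [integral_comp_mulVec det_ne_zero (fun z => Real.exp (-(z ⬝ᵥ z) / 2)),
    integral_exp_neg_dotProduct_self_div_two, det_eq,
    Real.sqrt_mul (x := (2 * Real.pi) ^ Fintype.card ι) (by positivity), Real.sqrt_inv,
    Real.sqrt_sq_eq_abs, sqrt_pow, smul_eq_mul, mul_comm]

end GaussianIntegral

section RealGaussian

lemma map_eq_gaussianReal_of_mgf_eq {Ω : Type*} [MeasurableSpace Ω] {P : Measure Ω}
    [IsProbabilityMeasure P] {X : Ω → ℝ} (hX : AEMeasurable X P) {m : ℝ} {v : ℝ≥0}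
    (h : mgf X P = fun t => Real.exp (m * t + v * t ^ 2 / 2)) :
    P.map X = gaussianReal m v := by
  have mgf_eq : mgf X P = mgf id (gaussianReal m v) := by rw [h, mgf_id_gaussianReal]
  have exp_integrable : integrableExpSet id (gaussianReal m v) = Set.univ :=
    Set.eq_univ_of_forall fun t => integrable_exp_mul_gaussianReal t
  have complexMGF_eq : complexMGF X P = complexMGF id (gaussianReal m v) := by
    have eqOn := eqOn_complexMGF_of_mgf mgf_eq
    rw [integrableExpSet_eq_of_mgf mgf_eq, exp_integrable] at eqOn
    exact funext fun z => eqOn (by simp)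
  simpa using Measure.ext_of_complexMGF_eq hX aemeasurable_id complexMGF_eq

lemma stdGaussianCDF_monotone : Monotone stdGaussianCDF :=
  fun _ _ hab => measureReal_mono (Set.Iic_subset_Iic.2 hab)

lemma stdGaussianCDF_neg (a : ℝ) : stdGaussianCDF (-a) = 1 - stdGaussianCDF a := by
  have := nullSingletonClass_gaussianReal (μ := 0) one_ne_zero
  calc stdGaussianCDF (-a)
      = ((gaussianReal 0 1).map (fun x => -x)).real (Set.Iic (-a)) := by
        rw [gaussianReal_map_neg, neg_zero]; rfl
    _ = (gaussianReal 0 1).real (Set.Ici a) := by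
        rw [map_measureReal_apply measurable_neg measurableSet_Iic]
        simp
    _ = (gaussianReal 0 1).real (Set.Iic a)ᶜ := by
        rw [Set.compl_Iic, measureReal_congr Ioi_ae_eq_Ici]
    _ = 1 - stdGaussianCDF a := probReal_compl_eq_one_sub measurableSet_Iic

end RealGaussian

section NeymanPearson

variable {α : Type*} [MeasurableSpace α] {μ : Measure α} {h L : α → ℝ} {s : Set α} {k : ℝ}

lemma integral_mul_le_setIntegral_of_integral_le_measureReal [IsFiniteMeasure μ]
    (hL : Integrable L μ) (hs : MeasurableSet s) (hk : 0 ≤ k)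
    (k_le : ∀ x ∈ s, k ≤ L x) (le_k : ∀ x ∉ s, L x ≤ k)
    (hh : AEStronglyMeasurable h μ) (h01 : ∀ x, h x ∈ Set.Icc (0 : ℝ) 1)
    (hle : ∫ x, h x ∂μ ≤ μ.real s) :
    ∫ x, h x * L x ∂μ ≤ ∫ x in s, L x ∂μ := by
  have norm_h_le : ∀ᵐ x ∂μ, ‖h x‖ ≤ 1 :=
    ae_of_all _ fun x => by rw [Real.norm_of_nonneg (h01 x).1]; exact (h01 x).2
  have h_integrable : Integrable h μ := Integrable.of_bound hh 1 norm_h_le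
  have hL_integrable : Integrable (fun x => h x * L x) μ := hL.bdd_mul hh norm_h_le
  have pointwise (x : α) : h x * L x - k * h x ≤ s.indicator (fun y => L y - k) x := by
    by_cases hx : x ∈ s
    · rw [Set.indicator_of_mem hx]
      nlinarith [k_le x hx, (h01 x).2]
    · rw [Set.indicator_of_notMem hx]
      nlinarith [le_k x hx, (h01 x).1]
  have integrated : ∫ x, h x * L x ∂μ - k * ∫ x, h x ∂μ ≤ ∫ x in s, L x ∂μ - k * μ.real s :=
    calc ∫ x, h x * L x ∂μ - k * ∫ x, h x ∂μ
        = ∫ x, (h x * L x - k * h x) ∂μ := by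
          rw [integral_sub hL_integrable (h_integrable.const_mul k), integral_const_mul]
      _ ≤ ∫ x, s.indicator (fun y => L y - k) x ∂μ :=
          integral_mono (hL_integrable.sub (h_integrable.const_mul k))
            ((hL.sub (integrable_const k)).indicator hs) pointwise
      _ = ∫ x in s, L x ∂μ - k * μ.real s := by
          rw [integral_indicator hs, integral_sub hL.integrableOn (integrable_const k),
            setIntegral_const, smul_eq_mul, mul_comm]
  linarith [mul_le_mul_of_nonneg_left hle hk]

end NeymanPearson

section CenteredGaussian

variable {n : ℕ} {Sig : Matrix (Fin n) (Fin n) ℝ}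

/-- The centered Gaussian measure `N(0, Σ)` on `ℝⁿ`, encoded by its Lebesgue density so that
smoothing a function means integrating it against this measure. It is a probability measure when
`Sig` is positive definite. -/
noncomputable def centeredGaussian (Sig : Matrix (Fin n) (Fin n) ℝ) : Measure (Fin n → ℝ) :=
  volume.withDensity fun ε => ENNReal.ofReal (gaussDensity n Sig ε)

lemma gaussDensity_nonneg (ε : Fin n → ℝ) : 0 ≤ gaussDensity n Sig ε := by
  unfold gaussDensity
  positivity

lemma continuous_gaussDensity : Continuous (gaussDensity n Sig) := by
  unfold gaussDensity
  fun_prop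

lemma integral_gaussDensity (hSig : Sig.PosDef) : ∫ ε, gaussDensity n Sig ε = 1 := by
  have det_pos : 0 < Sig.det := hSig.det_pos
  unfold gaussDensity
  rw [integral_const_mul, integral_exp_neg_dotProduct_mulVec_div_two hSig.inv, det_nonsing_inv,
    Ring.inverse_eq_inv', inv_inv, Fintype.card_fin]
  exact inv_mul_cancel₀ (by positivity)

lemma isProbabilityMeasure_centeredGaussian (hSig : Sig.PosDef) :
    IsProbabilityMeasure (centeredGaussian Sig) := by
  have integrable : Integrable (gaussDensity n Sig) :=
    .of_integral_ne_zero (by rw [integral_gaussDensity hSig]; exact one_ne_zero)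
  refine ⟨?_⟩
  rw [centeredGaussian, withDensity_apply _ MeasurableSet.univ, setLIntegral_univ,
    ← ofReal_integral_eq_lintegral_ofReal integrable (ae_of_all _ gaussDensity_nonneg),
    integral_gaussDensity hSig, ENNReal.ofReal_one]

lemma integral_centeredGaussian (h : (Fin n → ℝ) → ℝ) :
    ∫ ε, h ε ∂(centeredGaussian Sig) = ∫ ε, h ε * gaussDensity n Sig ε := by
  rw [centeredGaussian, integral_withDensity_eq_integral_toReal_smul
    continuous_gaussDensity.measurable.ennreal_ofReal (by simp)]
  simp only [ENNReal.toReal_ofReal (gaussDensity_nonneg _), smul_eq_mul, mul_comm]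

lemma gaussDensity_sub_mulVec (hSig : Sig.PosDef) (w ε : Fin n → ℝ) :
    gaussDensity n Sig (ε - Sig *ᵥ w) =
      Real.exp (w ⬝ᵥ ε - w ⬝ᵥ (Sig *ᵥ w) / 2) * gaussDensity n Sig ε := by
  have inv_mulVec : Sig⁻¹ *ᵥ (Sig *ᵥ w) = w := by
    rw [mulVec_mulVec, nonsing_inv_mul _ hSig.det_pos.ne'.isUnit, one_mulVec]
  have cross_term : (Sig *ᵥ w) ⬝ᵥ (Sig⁻¹ *ᵥ ε) = w ⬝ᵥ ε := by
    have inv_symm : (Sig⁻¹)ᵀ = Sig⁻¹ := by simpa using hSig.inv.isHermitian.eq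
    rw [dotProduct_mulVec, ← mulVec_transpose, inv_symm, inv_mulVec]
  unfold gaussDensity
  rw [mul_left_comm, ← Real.exp_add, mulVec_sub, inv_mulVec, dotProduct_sub, sub_dotProduct,
    sub_dotProduct, cross_term, dotProduct_comm ε w, dotProduct_comm (Sig *ᵥ w) w]
  ring_nf

lemma integral_comp_add_mulVec_centeredGaussian (hSig : Sig.PosDef) (w : Fin n → ℝ)
    (h : (Fin n → ℝ) → ℝ) :
    ∫ ε, h (ε + Sig *ᵥ w) ∂(centeredGaussian Sig) =
      ∫ ε, h ε * Real.exp (w ⬝ᵥ ε - w ⬝ᵥ (Sig *ᵥ w) / 2) ∂(centeredGaussian Sig) := by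
  rw [integral_centeredGaussian, integral_centeredGaussian,
    ← integral_sub_right_eq_self _ (Sig *ᵥ w)]
  simp only [sub_add_cancel, gaussDensity_sub_mulVec hSig, mul_assoc]

lemma integral_exp_dotProduct_sub_centeredGaussian (hSig : Sig.PosDef) (w : Fin n → ℝ) :
    ∫ ε, Real.exp (w ⬝ᵥ ε - w ⬝ᵥ (Sig *ᵥ w) / 2) ∂(centeredGaussian Sig) = 1 := by
  have := isProbabilityMeasure_centeredGaussian hSig
  simpa using (integral_comp_add_mulVec_centeredGaussian hSig w fun _ => 1).symm

lemma setIntegral_exp_dotProduct_sub_centeredGaussian (hSig : Sig.PosDef) (w : Fin n → ℝ)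
    {s : Set (Fin n → ℝ)} (hs : MeasurableSet s) :
    ∫ ε in s, Real.exp (w ⬝ᵥ ε - w ⬝ᵥ (Sig *ᵥ w) / 2) ∂(centeredGaussian Sig) =
      (centeredGaussian Sig).real ((fun ε => ε + Sig *ᵥ w) ⁻¹' s) := by
  calc ∫ ε in s, Real.exp (w ⬝ᵥ ε - w ⬝ᵥ (Sig *ᵥ w) / 2) ∂(centeredGaussian Sig)
      = ∫ ε, s.indicator 1 ε * Real.exp (w ⬝ᵥ ε - w ⬝ᵥ (Sig *ᵥ w) / 2)
          ∂(centeredGaussian Sig) := by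
        rw [← integral_indicator hs]
        congr with ε
        by_cases hε : ε ∈ s <;> simp [hε]
    _ = ∫ ε, s.indicator 1 (ε + Sig *ᵥ w) ∂(centeredGaussian Sig) :=
        (integral_comp_add_mulVec_centeredGaussian hSig w _).symm
    _ = (centeredGaussian Sig).real ((fun ε => ε + Sig *ᵥ w) ⁻¹' s) :=
        integral_indicator_one (hs.preimage (by fun_prop))

lemma mgf_dotProduct_centeredGaussian (hSig : Sig.PosDef) (w : Fin n → ℝ) (t : ℝ) :
    mgf (fun ε => w ⬝ᵥ ε) (centeredGaussian Sig) t =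
      Real.exp (w ⬝ᵥ (Sig *ᵥ w) * t ^ 2 / 2) := by
  have normalized := integral_exp_dotProduct_sub_centeredGaussian hSig (t • w)
  simp only [smul_dotProduct, mulVec_smul, dotProduct_smul, smul_eq_mul, Real.exp_sub,
    integral_div] at normalized
  rw [mgf, eq_of_div_eq_one normalized]
  ring_nf

lemma map_dotProduct_centeredGaussian (hSig : Sig.PosDef) (w : Fin n → ℝ) :
    (centeredGaussian Sig).map (fun ε => w ⬝ᵥ ε) =
      gaussianReal 0 (w ⬝ᵥ (Sig *ᵥ w)).toNNReal := by
  have := isProbabilityMeasure_centeredGaussian hSig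
  have variance_nonneg : 0 ≤ w ⬝ᵥ (Sig *ᵥ w) := by
    simpa using hSig.posSemidef.dotProduct_mulVec_nonneg w
  refine map_eq_gaussianReal_of_mgf_eq (by fun_prop) (funext fun t => ?_)
  rw [mgf_dotProduct_centeredGaussian hSig, Real.coe_toNNReal _ variance_nonneg, zero_mul, zero_add]

lemma centeredGaussian_real_halfspace (hSig : Sig.PosDef) {u : Fin n → ℝ}
    (hu : u ⬝ᵥ (Sig *ᵥ u) = 1) (a : ℝ) :
    (centeredGaussian Sig).real {ε | u ⬝ᵥ ε ≤ a} = stdGaussianCDF a := by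
  have law := map_dotProduct_centeredGaussian hSig u
  rw [hu, Real.toNNReal_one] at law
  rw [stdGaussianCDF, ← law, ← measureReal_def,
    map_measureReal_apply (by fun_prop) measurableSet_Iic]
  rfl

end CenteredGaussian

section Smoothing

variable {n : ℕ} {Sig : Matrix (Fin n) (Fin n) ℝ} {h : (Fin n → ℝ) → ℝ} {a : ℝ}

lemma integral_comp_add_mulVec_neg_smul_le_stdGaussianCDF (hSig : Sig.PosDef)
    (hh : Measurable h) (h01 : ∀ v, h v ∈ Set.Icc (0 : ℝ) 1)
    (hle : ∫ ε, h ε ∂(centeredGaussian Sig) ≤ stdGaussianCDF a)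
    {u : Fin n → ℝ} (hu : u ⬝ᵥ (Sig *ᵥ u) = 1) {r : ℝ} (hr : 0 ≤ r) :
    ∫ ε, h (ε + Sig *ᵥ (-r • u)) ∂(centeredGaussian Sig) ≤ stdGaussianCDF (a + r) := by
  have := isProbabilityMeasure_centeredGaussian hSig
  have halfspace_measurable : MeasurableSet {ε | u ⬝ᵥ ε ≤ a} :=
    measurableSet_le (by fun_prop) measurable_const
  have translated_halfspace :
      (fun ε => ε + Sig *ᵥ (-r • u)) ⁻¹' {ε | u ⬝ᵥ ε ≤ a} = {ε | u ⬝ᵥ ε ≤ a + r} := by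
    ext ε
    simp [dotProduct_add, mulVec_neg, mulVec_smul, hu]
  have exponent_eq (ε : Fin n → ℝ) :
      (-r • u) ⬝ᵥ ε - (-r • u) ⬝ᵥ (Sig *ᵥ (-r • u)) / 2 = -r * (u ⬝ᵥ ε) - r ^ 2 / 2 := by
    simp only [smul_dotProduct, mulVec_smul, dotProduct_smul, smul_eq_mul, hu]
    ring
  rw [integral_comp_add_mulVec_centeredGaussian hSig, ← centeredGaussian_real_halfspace hSig hu,
    ← translated_halfspace,
    ← setIntegral_exp_dotProduct_sub_centeredGaussian hSig _ halfspace_measurable]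
  -- The threshold is the likelihood ratio on the hyperplane bounding the half-space.
  refine integral_mul_le_setIntegral_of_integral_le_measureReal
    (k := Real.exp (-r * a - r ^ 2 / 2)) ?_ halfspace_measurable (Real.exp_pos _).le
    (fun ε hε => ?_) (fun ε hε => ?_) hh.aestronglyMeasurable h01
    (by rwa [centeredGaussian_real_halfspace hSig hu])
  · refine .of_integral_ne_zero ?_
    rw [integral_exp_dotProduct_sub_centeredGaussian hSig]
    exact one_ne_zero
  · rw [exponent_eq, Real.exp_le_exp]
    linarith [mul_le_mul_of_nonneg_left (show u ⬝ᵥ ε ≤ a from hε) hr]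
  · rw [exponent_eq, Real.exp_le_exp]
    linarith [mul_le_mul_of_nonneg_left (show a < u ⬝ᵥ ε from not_le.1 hε).le hr]

lemma integral_comp_add_le_stdGaussianCDF (hSig : Sig.PosDef)
    (hh : Measurable h) (h01 : ∀ v, h v ∈ Set.Icc (0 : ℝ) 1)
    (hle : ∫ ε, h ε ∂(centeredGaussian Sig) ≤ stdGaussianCDF a) (δ : Fin n → ℝ) :
    ∫ ε, h (ε + δ) ∂(centeredGaussian Sig) ≤
      stdGaussianCDF (a + Real.sqrt (δ ⬝ᵥ (Sig⁻¹ *ᵥ δ))) := by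
  rcases eq_or_ne δ 0 with rfl | δ_ne_zero
  · simpa using hle
  set r := Real.sqrt (δ ⬝ᵥ (Sig⁻¹ *ᵥ δ))
  have quadratic_pos : 0 < δ ⬝ᵥ (Sig⁻¹ *ᵥ δ) := by
    simpa using hSig.inv.dotProduct_mulVec_pos δ_ne_zero
  have r_pos : 0 < r := Real.sqrt_pos.2 quadratic_pos
  have r_sq : δ ⬝ᵥ (Sig⁻¹ *ᵥ δ) = r ^ 2 := (Real.sq_sqrt quadratic_pos.le).symm
  have mulVec_inv : Sig *ᵥ (Sig⁻¹ *ᵥ δ) = δ := by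
    rw [mulVec_mulVec, mul_nonsing_inv _ hSig.det_pos.ne'.isUnit, one_mulVec]
  set u := -r⁻¹ • (Sig⁻¹ *ᵥ δ) with u_def
  have u_unit : u ⬝ᵥ (Sig *ᵥ u) = 1 := by
    rw [u_def, mulVec_smul, mulVec_inv, smul_dotProduct, dotProduct_smul, dotProduct_comm, r_sq]
    simp only [smul_eq_mul]
    field_simp
  have mulVec_u : Sig *ᵥ (-r • u) = δ := by
    rw [u_def, smul_smul, neg_mul_neg, mul_inv_cancel₀ r_pos.ne', one_smul, mulVec_inv]
  simpa only [mulVec_u] using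
    integral_comp_add_mulVec_neg_smul_le_stdGaussianCDF hSig hh h01 hle u_unit r_pos.le

lemma stdGaussianCDF_le_integral_comp_add (hSig : Sig.PosDef)
    (hh : Measurable h) (h01 : ∀ v, h v ∈ Set.Icc (0 : ℝ) 1)
    (hle : stdGaussianCDF a ≤ ∫ ε, h ε ∂(centeredGaussian Sig)) (δ : Fin n → ℝ) :
    stdGaussianCDF (a - Real.sqrt (δ ⬝ᵥ (Sig⁻¹ *ᵥ δ))) ≤
      ∫ ε, h (ε + δ) ∂(centeredGaussian Sig) := by
  have := isProbabilityMeasure_centeredGaussian hSig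
  have integral_one_sub (d : Fin n → ℝ) : ∫ ε, (1 - h (ε + d)) ∂(centeredGaussian Sig) =
      1 - ∫ ε, h (ε + d) ∂(centeredGaussian Sig) := by
    have integrable : Integrable (fun ε => h (ε + d)) (centeredGaussian Sig) :=
      .of_mem_Icc 0 1 (by fun_prop) (ae_of_all _ fun ε => h01 (ε + d))
    rw [integral_sub (integrable_const 1) integrable, integral_const, probReal_univ, one_smul]
  have complement_le : ∫ ε, (1 - h ε) ∂(centeredGaussian Sig) ≤ stdGaussianCDF (-a) := by
    have complement_eq := integral_one_sub 0
    simp only [add_zero] at complement_eq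
    rw [complement_eq, stdGaussianCDF_neg]
    linarith
  have translated_complement_le := integral_comp_add_le_stdGaussianCDF hSig (h := fun v => 1 - h v)
    (by fun_prop) (fun v => Set.Icc.mem_iff_one_sub_mem.1 (h01 v)) complement_le δ
  rw [integral_one_sub, neg_add_eq_sub, ← neg_sub a, stdGaussianCDF_neg] at translated_complement_le
  linarith

theorem gaussian_smoothing_ellipsoid_certificate_general {κ : Type*} (hSig : Sig.PosDef)
    {f : (Fin n → ℝ) → κ → ℝ} (hf : ∀ c, Measurable fun v => f v c)
    (hf01 : ∀ v c, f v c ∈ Set.Icc (0 : ℝ) 1) {x : Fin n → ℝ} {cA : κ} {a b : ℝ}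
    (ha : stdGaussianCDF a ≤ ∫ ε, f (x + ε) cA ∂(centeredGaussian Sig))
    (hb : ∀ c, c ≠ cA → ∫ ε, f (x + ε) c ∂(centeredGaussian Sig) ≤ stdGaussianCDF b)
    {δ : Fin n → ℝ} (hδ : Real.sqrt (δ ⬝ᵥ (Sig⁻¹ *ᵥ δ)) ≤ (1 / 2) * (a - b)) :
    ∀ c, c ≠ cA → ∫ ε, f (x + δ + ε) c ∂(centeredGaussian Sig) ≤
      ∫ ε, f (x + δ + ε) cA ∂(centeredGaussian Sig) := by
  intro c hc
  have smoothed_measurable (i : κ) : Measurable fun ε => f (x + ε) i :=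
    (hf i).comp (measurable_const_add x)
  have upper := integral_comp_add_le_stdGaussianCDF hSig (smoothed_measurable c)
    (fun ε => hf01 (x + ε) c) (hb c hc) δ
  have lower := stdGaussianCDF_le_integral_comp_add hSig (smoothed_measurable cA)
    (fun ε => hf01 (x + ε) cA) ha δ
  simp only [add_assoc, add_comm δ]
  exact upper.trans ((stdGaussianCDF_monotone (by linarith)).trans lower)

end Smoothing

/-- ellipsoid certificate for Gaussian-smoothed classifiers: the top
class `cA` is preserved for `δ` with
`√(δᵀΣ⁻¹δ) ≤ (1/2)(Φ⁻¹(g^{cA}(x)) − Φ⁻¹(max_{c ≠ cA} g^c(x)))`. -/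
theorem gaussian_smoothing_ellipsoid_certificate (n K : ℕ)
    (Sig : Matrix (Fin n) (Fin n) ℝ) (hSig : Sig.PosDef)
    (f : (Fin n → ℝ) → Fin K → ℝ) (hf : Measurable f)
    (hf01 : ∀ v i, f v i ∈ Set.Icc (0:ℝ) 1)
    (gS : (Fin n → ℝ) → Fin K → ℝ)
    (hgS : ∀ x i, gS x i = ∫ ε, f (x + ε) i * gaussDensity n Sig ε)
    (hg01 : ∀ x i, gS x i ∈ Set.Ioo (0:ℝ) 1)
    (Φinv : ℝ → ℝ)
    (hΦinv : ∀ p ∈ Set.Ioo (0:ℝ) 1, stdGaussianCDF (Φinv p) = p)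
    (x : Fin n → ℝ) (cA : Fin K) (hcA : ∀ i, gS x i ≤ gS x cA)
    (hne : (Finset.univ.erase cA).Nonempty)
    (δ : Fin n → ℝ)
    (hδ : Real.sqrt (δ ⬝ᵥ (Sig⁻¹ *ᵥ δ)) ≤ (1 / 2) *
      (Φinv (gS x cA) - Φinv ((Finset.univ.erase cA).sup' hne (fun c => gS x c)))) :
    ∀ c, c ≠ cA → gS (x + δ) c ≤ gS (x + δ) cA := by
  obtain ⟨j, -, sup_eq⟩ := Finset.exists_mem_eq_sup' hne (fun c => gS x c)
  have cdf_le_cA : stdGaussianCDF (Φinv (gS x cA)) ≤ gS x cA := (hΦinv _ (hg01 x cA)).le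
  have le_cdf_sup (c : Fin K) (hc : c ≠ cA) : gS x c ≤
      stdGaussianCDF (Φinv ((Finset.univ.erase cA).sup' hne (fun c => gS x c))) := by
    rw [hΦinv _ (sup_eq ▸ hg01 x j)]
    exact Finset.le_sup' (fun c => gS x c) (Finset.mem_erase.2 ⟨hc, Finset.mem_univ c⟩)
  simp only [hgS, ← integral_centeredGaussian] at hδ cdf_le_cA le_cdf_sup ⊢
  exact gaussian_smoothing_ellipsoid_certificate_general hSig (by fun_prop) hf01
    cdf_le_cA le_cdf_sup hδ
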